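/- arXiv:math/0611922 — 2 statements merged into one kernel-verified Lean document; each statement's English description precedes it below -/
import Mathlib

section
/- Let f : ℝ → ℝ be a twice continuously differentiable function with f(x) > 0 for all x, satisfying f(x)·f''(x) = 1 + f'(x)² for all x ∈ ℝ. Then there exist constants c > 0 and a ∈ ℝ such that f(x) = c·cosh((x − a)/c) for all x ∈ ℝ. (This is the analytic content of Euler's theorem that the catenoid is the only nonplanar complete minimal surface of revolution in ℝ³.) -/
open Real

/-- Euler's theorem (analytic content): any positive `C²` solution of the catenary equation
`f·f'' = 1 + (f')²` on `ℝ` is of the form `f(x) = c·cosh((x − a)/c)` with `c > 0`. -/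
theorem catenary_ode_solutions_are_catenaries (f : ℝ → ℝ) (hf : ContDiff ℝ 2 f)
    (hpos : ∀ x : ℝ, 0 < f x)
    (hode : ∀ x : ℝ, f x * deriv (deriv f) x = 1 + (deriv f x) ^ 2) :
    ∃ c > (0 : ℝ), ∃ a : ℝ, ∀ x : ℝ, f x = c * Real.cosh ((x - a) / c) := by
  have h1 : ∀ x, HasDerivAt f (deriv f x) x := fun x =>
    (hf.differentiable (by norm_num) x).hasDerivAt
  have hf' : ContDiff ℝ 1 (deriv f) := by
    have h : ContDiff ℝ (1 + 1) f := by
      convert hf using 1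
      norm_num
    exact (contDiff_succ_iff_deriv.1 h).2.2
  have h2 : ∀ x, HasDerivAt (deriv f) (deriv (deriv f) x) x := fun x =>
    (hf'.differentiable (by norm_num) x).hasDerivAt
  -- `u = arsinh f'`, so that `f' = sinh u` and `√(1 + f'²) = cosh u`
  set u : ℝ → ℝ := fun x => arsinh (deriv f x) with hu
  have hsinh : ∀ x, sinh (u x) = deriv f x := fun x => sinh_arsinh _
  have hcosh : ∀ x, cosh (u x) = √(1 + deriv f x ^ 2) := fun x => cosh_arsinh _
  have hode' : ∀ x, deriv (deriv f) x = cosh (u x) ^ 2 / f x := fun x => by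
    rw [eq_div_iff (hpos x).ne', cosh_sq, hsinh]
    linarith [hode x]
  have hu' : ∀ x, HasDerivAt u (cosh (u x) / f x) x := fun x => by
    have h := (hasDerivAt_arsinh (deriv f x)).comp x (h2 x)
    rw [← hcosh, hode'] at h
    refine h.congr_deriv ?_
    have := (cosh_pos (u x)).ne'
    field_simp
  have hc' : ∀ x, HasDerivAt (fun x => f x / cosh (u x)) 0 x := fun x => by
    have h := (h1 x).div (hu' x).cosh (cosh_pos (u x)).ne'
    refine h.congr_deriv ?_
    have := (cosh_pos (u x)).ne'
    have := (hpos x).ne'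
    rw [hsinh]
    field_simp
    ring
  have hc : ∀ x, f x / cosh (u x) = f 0 / cosh (u 0) := fun x =>
    is_const_of_deriv_eq_zero (fun y => (hc' y).differentiableAt) (fun y => (hc' y).deriv) x 0
  obtain ⟨c, hcdef⟩ : ∃ c, c = f 0 / cosh (u 0) := ⟨_, rfl⟩
  have hcpos : 0 < c := hcdef ▸ div_pos (hpos 0) (cosh_pos _)
  have hfc : ∀ x, f x = c * cosh (u x) := fun x => by
    rw [hcdef, ← hc x, div_mul_cancel₀ _ (cosh_pos _).ne']
  have hv' : ∀ x, HasDerivAt (fun x => u x - x / c) 0 x := fun x => by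
    refine ((hu' x).sub ((hasDerivAt_id x).div_const c)).congr_deriv ?_
    have := (cosh_pos (u x)).ne'
    rw [hfc]
    field_simp
    ring
  refine ⟨c, hcpos, -(c * u 0), fun x => ?_⟩
  have hv : u x - x / c = u 0 - 0 / c :=
    is_const_of_deriv_eq_zero (f := fun x => u x - x / c)
      (fun y => (hv' y).differentiableAt) (fun y => (hv' y).deriv) x 0
  have : (x - -(c * u 0)) / c = u x := by
    have hx : u x = u 0 + x / c := by simp at hv; linarith
    rw [hx]
    field_simp
    ring
  rw [this, hfc]
end

section
/- Define F : ℝ³ → ℝ by F(x,y,z) = sinh x · sinh y − sin z. Then at every point p ∈ ℝ³ with F(p) = 0, the mean curvature expression |∇F|²·ΔF − ∇Fᵀ·(Hess F)·∇F vanishes, where ∇F is the gradient, ΔF the Laplacian, and Hess F the Hessian matrix of F. (Hence the level set {F = 0}, Scherk's singly periodic minimal surface sin z = sinh x sinh y, is a minimal surface in ℝ³; it is invariant under the translation (0,0,2π).) -/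
open Real

/-- The defining function of Scherk's singly periodic surface: `F(x,y,z) = sinh x · sinh y − sin z`. -/
noncomputable def scherkF (x y z : ℝ) : ℝ := Real.sinh x * Real.sinh y - Real.sin z

/-- Partial derivative in `x` of a function of three variables. -/
noncomputable def pFx (F : ℝ → ℝ → ℝ → ℝ) (x y z : ℝ) : ℝ := deriv (fun t => F t y z) x
/-- Partial derivative in `y`. -/
noncomputable def pFy (F : ℝ → ℝ → ℝ → ℝ) (x y z : ℝ) : ℝ := deriv (fun t => F x t z) y
/-- Partial derivative in `z`. -/
noncomputable def pFz (F : ℝ → ℝ → ℝ → ℝ) (x y z : ℝ) : ℝ := deriv (fun t => F x y t) z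
/-- Second partial derivative `F_xx`. -/
noncomputable def pFxx (F : ℝ → ℝ → ℝ → ℝ) (x y z : ℝ) : ℝ := deriv (fun t => pFx F t y z) x
/-- Second partial derivative `F_yy`. -/
noncomputable def pFyy (F : ℝ → ℝ → ℝ → ℝ) (x y z : ℝ) : ℝ := deriv (fun t => pFy F x t z) y
/-- Second partial derivative `F_zz`. -/
noncomputable def pFzz (F : ℝ → ℝ → ℝ → ℝ) (x y z : ℝ) : ℝ := deriv (fun t => pFz F x y t) z
/-- Mixed second partial derivative `F_xy`. -/
noncomputable def pFxy (F : ℝ → ℝ → ℝ → ℝ) (x y z : ℝ) : ℝ := deriv (fun t => pFx F x t z) y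
/-- Mixed second partial derivative `F_xz`. -/
noncomputable def pFxz (F : ℝ → ℝ → ℝ → ℝ) (x y z : ℝ) : ℝ := deriv (fun t => pFx F x y t) z
/-- Mixed second partial derivative `F_yz`. -/
noncomputable def pFyz (F : ℝ → ℝ → ℝ → ℝ) (x y z : ℝ) : ℝ := deriv (fun t => pFy F x y t) z

/-- The mean curvature expression `|∇F|²·ΔF − ∇Fᵀ·(Hess F)·∇F` for a level set `{F = 0}` in `ℝ³`:
`(F_x² + F_y² + F_z²)(F_xx + F_yy + F_zz) − (F_x²F_xx + F_y²F_yy + F_z²F_zz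
  + 2F_xF_yF_xy + 2F_xF_zF_xz + 2F_yF_zF_yz)`. -/
noncomputable def meanCurvExpr (F : ℝ → ℝ → ℝ → ℝ) (x y z : ℝ) : ℝ :=
  ((pFx F x y z) ^ 2 + (pFy F x y z) ^ 2 + (pFz F x y z) ^ 2)
      * (pFxx F x y z + pFyy F x y z + pFzz F x y z)
    - ((pFx F x y z) ^ 2 * pFxx F x y z + (pFy F x y z) ^ 2 * pFyy F x y z
        + (pFz F x y z) ^ 2 * pFzz F x y z
        + 2 * pFx F x y z * pFy F x y z * pFxy F x y z
        + 2 * pFx F x y z * pFz F x y z * pFxz F x y z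
        + 2 * pFy F x y z * pFz F x y z * pFyz F x y z)

lemma scherk_pFx : pFx scherkF = fun x y _ => Real.cosh x * Real.sinh y := by
  funext x y z
  exact (((Real.hasDerivAt_sinh x).mul_const (Real.sinh y)).sub_const (Real.sin z)).deriv

lemma scherk_pFy : pFy scherkF = fun x y _ => Real.sinh x * Real.cosh y := by
  funext x y z
  exact (((Real.hasDerivAt_sinh y).const_mul (Real.sinh x)).sub_const (Real.sin z)).deriv

lemma scherk_pFz : pFz scherkF = fun _ _ z => -Real.cos z := by
  funext x y z
  exact ((Real.hasDerivAt_sin z).const_sub (Real.sinh x * Real.sinh y)).deriv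

/-- Scherk's singly periodic surface `sin z = sinh x sinh y` is minimal: the mean curvature
expression `|∇F|²·ΔF − ∇Fᵀ·(Hess F)·∇F` vanishes at every point of the level set `{F = 0}`. -/
theorem scherk_singly_periodic_is_minimal :
    ∀ x y z : ℝ, scherkF x y z = 0 → meanCurvExpr scherkF x y z = 0 := by
  intro x y z h
  have hs : Real.sin z = Real.sinh x * Real.sinh y := by
    unfold scherkF at h
    linarith
  have hxx : pFxx scherkF x y z = Real.sinh x * Real.sinh y := by
    simp only [pFxx, scherk_pFx]
    exact ((Real.hasDerivAt_cosh x).mul_const (Real.sinh y)).deriv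
  have hyy : pFyy scherkF x y z = Real.sinh x * Real.sinh y := by
    simp only [pFyy, scherk_pFy]
    exact ((Real.hasDerivAt_cosh y).const_mul (Real.sinh x)).deriv
  have hzz : pFzz scherkF x y z = Real.sin z := by
    simp only [pFzz, scherk_pFz]
    simpa using (Real.hasDerivAt_cos z).fun_neg.deriv
  have hxy : pFxy scherkF x y z = Real.cosh x * Real.cosh y := by
    simp only [pFxy, scherk_pFx]
    exact ((Real.hasDerivAt_sinh y).const_mul (Real.cosh x)).deriv
  have hxz : pFxz scherkF x y z = 0 := by
    simp only [pFxz, scherk_pFx, deriv_const]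
  have hyz : pFyz scherkF x y z = 0 := by
    simp only [pFyz, scherk_pFy, deriv_const]
  have hc : Real.cos z ^ 2 = 1 - (Real.sinh x * Real.sinh y) ^ 2 := by
    rw [← hs, Real.cos_sq']
  simp only [meanCurvExpr, hxx, hyy, hzz, hxy, hxz, hyz, scherk_pFx, scherk_pFy, scherk_pFz, hs]
  have e : (-Real.cos z) ^ 2 = 1 - (Real.sinh x * Real.sinh y) ^ 2 := by
    rw [neg_sq, hc]
  rw [e]
  ring_nf
  simp only [Real.cosh_sq]
  ring
end
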